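/- Let F_n ∈ ℤ[[x₁, x₂, q]] be the generating function of Z_n-partitions of the zigzag poset Z_n, recording σ(a₁) by x₁, σ(b₁) by x₂, and all other values by q. Then (1 − x₂)(1 − x₁x₂) · F₁ = 1, and for all n ≥ 2, (1 − x₁)(1 − x₂)(1 − x₁x₂) · F_n = (1 − x₁x₂) · F_{n−1}(q x₂, q) − x₁(1 − x₂) · F_{n−1}(q x₁ x₂, q), where F_{n−1}(u, v) denotes the series obtained from F_{n−1} by substituting u for x₁ and v for x₂. -/

import Mathlib

open MvPowerSeries

/-- A `Z_n`-partition of the zigzag poset `Z_n`, encoded as a pair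
`ab = (σa, σb) : (ℕ → ℕ) × (ℕ → ℕ)` supported on `{1, …, n}`, where
`σa i = σ(a_i)` and `σb i = σ(b_i)`: order-reversing means `σ(a_i) ≤ σ(b_i)`
for `1 ≤ i ≤ n` and `σ(a_{i+1}) ≤ σ(b_i)` for `1 ≤ i ≤ n-1`. -/
def IsZigzagPartition (n : ℕ) (ab : (ℕ → ℕ) × (ℕ → ℕ)) : Prop :=
  (∀ i, i ∉ Finset.Icc 1 n → ab.1 i = 0 ∧ ab.2 i = 0) ∧
  (∀ i, 1 ≤ i → i ≤ n → ab.1 i ≤ ab.2 i) ∧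
  (∀ i, 1 ≤ i → i + 1 ≤ n → ab.1 (i + 1) ≤ ab.2 i)

/-- `F_n ∈ ℤ[[x₁, x₂, q]]` (variables `X 0 = x₁`, `X 1 = x₂`, `X 2 = q`): the
generating function of `Z_n`-partitions recording `σ(a₁)` by `x₁`, `σ(b₁)` by
`x₂`, and all other values by `q`. -/
noncomputable def Fzig (n : ℕ) : MvPowerSeries (Fin 3) ℤ :=
  fun e => (({ab : (ℕ → ℕ) × (ℕ → ℕ) | IsZigzagPartition n ab ∧
      ab.1 1 = e 0 ∧ ab.2 1 = e 1 ∧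
      ∑ i ∈ Finset.Icc 2 n, (ab.1 i + ab.2 i) = e 2}).ncard : ℤ)

/-- `F_n(q x₂, q)`: the series obtained from `F_n` by substituting `q x₂` for
`x₁` and `q` for `x₂`.  The substitution sends `x₁^i x₂^j q^k` to
`x₂^i q^{i+j+k}`, so the coefficient at `(e₀, e₁, e₂)` is `0` unless `e₀ = 0`,
and otherwise counts the `Z_n`-partitions `σ` with `σ(a₁) = e₁` and total sum
`e₂`. -/
noncomputable def FzigS1 (n : ℕ) : MvPowerSeries (Fin 3) ℤ :=
  fun e => if e 0 = 0 then
      (({ab : (ℕ → ℕ) × (ℕ → ℕ) | IsZigzagPartition n ab ∧ ab.1 1 = e 1 ∧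
        ∑ i ∈ Finset.Icc 1 n, (ab.1 i + ab.2 i) = e 2}).ncard : ℤ)
    else 0

/-- `F_n(q x₁ x₂, q)`: the series obtained from `F_n` by substituting `q x₁ x₂`
for `x₁` and `q` for `x₂`.  The substitution sends `x₁^i x₂^j q^k` to
`x₁^i x₂^i q^{i+j+k}`, so the coefficient at `(e₀, e₁, e₂)` is `0` unless
`e₀ = e₁`, and otherwise counts the `Z_n`-partitions `σ` with `σ(a₁) = e₀` and
total sum `e₂`. -/
noncomputable def FzigS2 (n : ℕ) : MvPowerSeries (Fin 3) ℤ :=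
  fun e => if e 0 = e 1 then
      (({ab : (ℕ → ℕ) × (ℕ → ℕ) | IsZigzagPartition n ab ∧ ab.1 1 = e 0 ∧
        ∑ i ∈ Finset.Icc 1 n, (ab.1 i + ab.2 i) = e 2}).ncard : ℤ)
    else 0

/-- The power series in three variables with coefficient `f i j k` at `x₁ ^ i * x₂ ^ j * q ^ k`. -/
def ofCoeffs (f : ℕ → ℕ → ℕ → ℤ) : MvPowerSeries (Fin 3) ℤ :=
  fun e => f (e 0) (e 1) (e 2)

theorem coeff_ofCoeffs (f : ℕ → ℕ → ℕ → ℤ) (e : Fin 3 →₀ ℕ) :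
    coeff e (ofCoeffs f) = f (e 0) (e 1) (e 2) := rfl

theorem coeff_X_mul_eq_ite {σ R : Type*} [Semiring R] [DecidableEq σ] (s : σ) (e : σ →₀ ℕ)
    (φ : MvPowerSeries σ R) :
    coeff e (X s * φ) = if e s = 0 then 0 else coeff (e - Finsupp.single s 1) φ := by
  rw [X, coeff_monomial_mul, one_mul]
  simp only [Finsupp.single_le_iff, Nat.one_le_iff_ne_zero, ite_not]

theorem X_zero_mul_ofCoeffs (f : ℕ → ℕ → ℕ → ℤ) :
    X 0 * ofCoeffs f = ofCoeffs fun i j k => if i = 0 then 0 else f (i - 1) j k := by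
  ext e
  simp [coeff_X_mul_eq_ite, coeff_ofCoeffs]

theorem X_one_mul_ofCoeffs (f : ℕ → ℕ → ℕ → ℤ) :
    X 1 * ofCoeffs f = ofCoeffs fun i j k => if j = 0 then 0 else f i (j - 1) k := by
  ext e
  simp [coeff_X_mul_eq_ite, coeff_ofCoeffs]

theorem ofCoeffs_sub (f g : ℕ → ℕ → ℕ → ℤ) :
    ofCoeffs f - ofCoeffs g = ofCoeffs fun i j k => f i j k - g i j k := rfl

theorem ofCoeffs_congr {f g : ℕ → ℕ → ℕ → ℤ} (h : ∀ i j k, f i j k = g i j k) :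
    ofCoeffs f = ofCoeffs g := by
  ext e
  exact h _ _ _

theorem one_eq_ofCoeffs :
    (1 : MvPowerSeries (Fin 3) ℤ) =
      ofCoeffs fun i j k => if i = 0 ∧ j = 0 ∧ k = 0 then 1 else 0 := by
  ext e
  rw [coeff_one, coeff_ofCoeffs]
  congr 1
  simp [Finsupp.ext_iff, Fin.forall_fin_succ]

/-- The `Z_n`-partitions of `k` whose value at `a₁` satisfies `p`. -/
def zigzagSet (n k : ℕ) (p : ℕ → Prop) : Set ((ℕ → ℕ) × (ℕ → ℕ)) :=
  {ab | IsZigzagPartition n ab ∧ p (ab.1 1) ∧ ∑ i ∈ Finset.Icc 1 n, (ab.1 i + ab.2 i) = k}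

theorem finite_setOf_bounded_support (n k : ℕ) :
    {f : ℕ → ℕ | (∀ i, i ∉ Finset.Icc 1 n → f i = 0) ∧ ∀ i, f i ≤ k}.Finite := by
  refine Set.Finite.of_finite_image (f := fun f (i : Fin (n + 1)) => f i) ?_ ?_
  · refine (Set.Finite.pi' fun _ => Set.finite_Iic k).subset ?_
    rintro _ ⟨f, hf, rfl⟩ i
    exact hf.2 i
  · intro f hf g hg h
    funext i
    by_cases hi : i ∈ Finset.Icc 1 n
    · exact congrFun h ⟨i, by simp at hi; omega⟩
    · rw [hf.1 i hi, hg.1 i hi]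

theorem zigzagSet_finite (n k : ℕ) (p : ℕ → Prop) : (zigzagSet n k p).Finite := by
  refine ((finite_setOf_bounded_support n k).prod (finite_setOf_bounded_support n k)).subset ?_
  rintro ab ⟨⟨hsupp, -⟩, -, hsum⟩
  have hle (i : ℕ) : ab.1 i + ab.2 i ≤ k := by
    by_cases hi : i ∈ Finset.Icc 1 n
    · exact hsum ▸ Finset.single_le_sum (f := fun i => ab.1 i + ab.2 i)
        (fun _ _ => Nat.zero_le _) hi
    · simp [hsupp i hi]
  exact ⟨⟨fun i hi => (hsupp i hi).1, fun i => by have := hle i; omega⟩,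
    ⟨fun i hi => (hsupp i hi).2, fun i => by have := hle i; omega⟩⟩

theorem ncard_zigzagSet_le_succ (n k j : ℕ) :
    (zigzagSet n k (· ≤ j + 1)).ncard =
      (zigzagSet n k (· ≤ j)).ncard + (zigzagSet n k (· = j + 1)).ncard := by
  rw [← Set.ncard_union_eq _ (zigzagSet_finite _ _ _) (zigzagSet_finite _ _ _)]
  · congr 1
    ext ab
    simp only [zigzagSet, Set.mem_union, Set.mem_ofPred_eq, Nat.le_add_one_iff]
    tauto
  · rw [Set.disjoint_left]
    rintro ab ⟨-, h, -⟩ ⟨-, h', -⟩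
    omega

/-- Prepending values at `a₁` and `b₁` to a `Z_n`-partition. -/
def zigzagCons (a b : ℕ) (ab : (ℕ → ℕ) × (ℕ → ℕ)) : (ℕ → ℕ) × (ℕ → ℕ) :=
  (fun i => if i = 0 then 0 else if i = 1 then a else ab.1 (i - 1),
    fun i => if i = 0 then 0 else if i = 1 then b else ab.2 (i - 1))

theorem sum_Icc_two_succ (f : ℕ → ℕ) (n : ℕ) :
    ∑ i ∈ Finset.Icc 2 (n + 1), f i = ∑ i ∈ Finset.Icc 1 n, f (i + 1) := by
  rw [← Finset.map_add_right_Icc 1 n 1, Finset.sum_map]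
  rfl

theorem Fzig_succ {n : ℕ} (hn : 1 ≤ n) :
    Fzig (n + 1) = ofCoeffs fun i j k =>
      if i ≤ j then ((zigzagSet n k (· ≤ j)).ncard : ℤ) else 0 := by
  ext e
  rw [coeff_ofCoeffs]
  change ((Set.ncard _ : ℕ) : ℤ) = _
  split_ifs with h
  · norm_cast
    symm
    refine Set.ncard_congr (fun ab _ => zigzagCons (e 0) (e 1) ab) ?_ ?_ ?_
    · rintro ab ⟨⟨hsupp, hdiag, hoff⟩, hle, hsum⟩
      refine ⟨⟨fun i hi => ?_, fun i h1 h2 => ?_, fun i h1 h2 => ?_⟩, rfl, rfl, ?_⟩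
      · simp only [Finset.mem_Icc] at hi hsupp
        have := hsupp (i - 1)
        simp only [zigzagCons]
        split_ifs <;> omega
      · have := hdiag (i - 1)
        simp only [zigzagCons]
        split_ifs <;> omega
      · obtain rfl | ⟨i, rfl⟩ : i = 1 ∨ ∃ m, i = m + 2 :=
          (Nat.lt_or_ge 1 i).symm.imp (by omega) fun h => ⟨i - 2, by omega⟩
        · simpa [zigzagCons] using hle
        · simpa [zigzagCons] using hoff (i + 1) (by omega) (by omega)
      · rw [sum_Icc_two_succ, ← hsum]
        refine Finset.sum_congr rfl fun i hi => ?_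
        have : i ≠ 0 := by simp at hi; omega
        simp [zigzagCons, this]
    · rintro ab ab' ⟨⟨hsupp, -⟩, -⟩ ⟨⟨hsupp', -⟩, -⟩ heq
      have h0 := hsupp 0 (by simp)
      have h0' := hsupp' 0 (by simp)
      refine Prod.ext (funext fun i => ?_) (funext fun i => ?_)
      · obtain rfl | hi := eq_or_ne i 0
        · rw [h0.1, h0'.1]
        · simpa [zigzagCons, hi] using congrFun (congrArg Prod.fst heq) (i + 1)
      · obtain rfl | hi := eq_or_ne i 0
        · rw [h0.2, h0'.2]
        · simpa [zigzagCons, hi] using congrFun (congrArg Prod.snd heq) (i + 1)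
    · rintro ab ⟨⟨hsupp, hdiag, hoff⟩, ha, hb, hsum⟩
      have h0 := hsupp 0 (by simp)
      refine ⟨(fun i => if i = 0 then 0 else ab.1 (i + 1),
        fun i => if i = 0 then 0 else ab.2 (i + 1)),
        ⟨⟨fun i hi => ?_, fun i h1 h2 => ?_, fun i h1 h2 => ?_⟩, ?_, ?_⟩, ?_⟩
      · simp only [Finset.mem_Icc] at hi hsupp
        have := hsupp (i + 1)
        dsimp only
        split_ifs
        · simp
        · apply this; omega
      · simpa [Nat.ne_of_gt h1] using hdiag (i + 1) (by omega) (by omega)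
      · simpa [Nat.ne_of_gt h1] using hoff (i + 1) (by omega) (by omega)
      · simpa [hb] using hoff 1 le_rfl (by omega)
      · rw [← hsum, sum_Icc_two_succ]
        refine Finset.sum_congr rfl fun i hi => ?_
        have : i ≠ 0 := by simp at hi; omega
        simp [this]
      · refine Prod.ext (funext fun i => ?_) (funext fun i => ?_)
        · obtain rfl | rfl | ⟨i, rfl⟩ : i = 0 ∨ i = 1 ∨ ∃ m, i = m + 2 := by
            rcases i with _ | _ | i <;> simp
          all_goals simp [zigzagCons, h0, ha]
        · obtain rfl | rfl | ⟨i, rfl⟩ : i = 0 ∨ i = 1 ∨ ∃ m, i = m + 2 := by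
            rcases i with _ | _ | i <;> simp
          all_goals simp [zigzagCons, h0, hb]
  · rw [Nat.cast_eq_zero]
    refine (congrArg Set.ncard (Set.eq_empty_iff_forall_notMem.2 ?_)).trans (Set.ncard_empty _)
    rintro ab ⟨⟨-, hdiag, -⟩, ha, hb, -⟩
    exact h (ha ▸ hb ▸ hdiag 1 le_rfl (by omega))

theorem Fzig_one :
    Fzig 1 = ofCoeffs fun i j k => if i ≤ j ∧ k = 0 then 1 else 0 := by
  ext e
  rw [coeff_ofCoeffs]
  change ((Set.ncard _ : ℕ) : ℤ) = _
  split_ifs with h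
  · norm_cast
    refine Set.ncard_eq_one.2 ⟨(Pi.single 1 (e 0), Pi.single 1 (e 1)), ?_⟩
    refine Set.eq_singleton_iff_unique_mem.2 ⟨⟨⟨fun i hi => ?_, fun i h1 h2 => ?_,
      fun i h1 h2 => by omega⟩, by simp, by simp, by simp [h.2]⟩, ?_⟩
    · have : i ≠ 1 := by rintro rfl; simp at hi
      simp [this]
    · obtain rfl : i = 1 := by omega
      simpa using h.1
    · rintro ab ⟨⟨hsupp, -⟩, ha, hb, -⟩
      refine Prod.ext (funext fun i => ?_) (funext fun i => ?_) <;>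
      · obtain rfl | hi := eq_or_ne i 1
        · simp [ha, hb]
        · simp [hi, hsupp i (by simp; omega)]
  · rw [Nat.cast_eq_zero]
    refine (congrArg Set.ncard (Set.eq_empty_iff_forall_notMem.2 ?_)).trans (Set.ncard_empty _)
    rintro ab ⟨⟨-, hdiag, -⟩, ha, hb, hk⟩
    exact h ⟨ha ▸ hb ▸ hdiag 1 le_rfl le_rfl, by simpa using hk.symm⟩

theorem FzigS1_eq (n : ℕ) :
    FzigS1 n = (1 - X 1) * ofCoeffs fun i j k =>
      if i = 0 then ((zigzagSet n k (· ≤ j)).ncard : ℤ) else 0 := by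
  rw [sub_mul, one_mul, X_one_mul_ofCoeffs, ofCoeffs_sub]
  refine ofCoeffs_congr (f := fun i j k =>
    if i = 0 then ((zigzagSet n k (· = j)).ncard : ℤ) else 0) fun i j k => ?_
  rcases j with _ | j
  · simp
  · by_cases hi : i = 0 <;> simp [hi, ncard_zigzagSet_le_succ]

theorem FzigS2_eq (n : ℕ) :
    FzigS2 n = (1 - X 0 * X 1) * ofCoeffs fun i j k =>
      if i = j then ((zigzagSet n k (· ≤ j)).ncard : ℤ) else 0 := by
  rw [sub_mul, one_mul, mul_assoc, X_one_mul_ofCoeffs, X_zero_mul_ofCoeffs, ofCoeffs_sub]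
  refine ofCoeffs_congr (f := fun i j k =>
    if i = j then ((zigzagSet n k (· = i)).ncard : ℤ) else 0) fun i j k => ?_
  rcases i with _ | i <;> rcases j with _ | j
  · simp
  · simp
  · simp
  · by_cases hi : i = j <;> simp [hi, ncard_zigzagSet_le_succ]

theorem one_sub_X_zero_mul_Fzig_succ {n : ℕ} (hn : 1 ≤ n) :
    (1 - X 0) * Fzig (n + 1) =
      (ofCoeffs fun i j k => if i = 0 then ((zigzagSet n k (· ≤ j)).ncard : ℤ) else 0) -
        X 0 * ofCoeffs fun i j k =>
          if i = j then ((zigzagSet n k (· ≤ j)).ncard : ℤ) else 0 := by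
  rw [Fzig_succ hn, sub_mul, one_mul, X_zero_mul_ofCoeffs, X_zero_mul_ofCoeffs, ofCoeffs_sub,
    ofCoeffs_sub]
  refine ofCoeffs_congr fun i j k => ?_
  rcases i with _ | i
  · simp
  · rcases lt_trichotomy i j with h | rfl | h
    · simp [h.ne, h.le, Nat.succ_le_of_lt h]
    · simp
    · simp [h.ne', h.not_ge, show ¬ i + 1 ≤ j by omega]

theorem one_sub_X_one_mul_Fzig_one :
    (1 - X 1) * Fzig 1 = ofCoeffs fun i j k => if i = j ∧ k = 0 then 1 else 0 := by
  rw [Fzig_one, sub_mul, one_mul, X_one_mul_ofCoeffs, ofCoeffs_sub]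
  refine ofCoeffs_congr fun i j k => ?_
  grind

theorem one_sub_X_mul_X_mul_diagonal :
    (1 - X 0 * X 1) * (ofCoeffs fun i j k => if i = j ∧ k = 0 then 1 else 0) = 1 := by
  rw [sub_mul, one_mul, mul_assoc, X_one_mul_ofCoeffs, X_zero_mul_ofCoeffs, ofCoeffs_sub,
    one_eq_ofCoeffs]
  refine ofCoeffs_congr fun i j k => ?_
  grind

/-- The recurrence for the zigzag posets:
`(1-x₂)(1-x₁x₂) F₁ = 1` and, for `n ≥ 2`,
`(1-x₁)(1-x₂)(1-x₁x₂) F_n = (1-x₁x₂) F_{n-1}(qx₂,q) - x₁(1-x₂) F_{n-1}(qx₁x₂,q)`. -/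
theorem zigzag_recurrence :
    (1 - X 1) * (1 - X 0 * X 1) * Fzig 1 = 1 ∧
    ∀ n : ℕ, 2 ≤ n →
      (1 - X 0) * (1 - X 1) * (1 - X 0 * X 1) * Fzig n =
        (1 - X 0 * X 1) * FzigS1 (n - 1) - X 0 * (1 - X 1) * FzigS2 (n - 1) := by
  refine ⟨?_, fun n hn => ?_⟩
  · rw [mul_right_comm, one_sub_X_one_mul_Fzig_one, mul_comm, one_sub_X_mul_X_mul_diagonal]
  · obtain ⟨n, rfl⟩ := Nat.exists_eq_add_of_le' (show 1 ≤ n by omega)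
    rw [Nat.add_sub_cancel, FzigS1_eq, FzigS2_eq]
    linear_combination (1 - X 1) * (1 - X 0 * X 1) *
      one_sub_X_zero_mul_Fzig_succ (show 1 ≤ n by omega)
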